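/- arXiv:1804.10461 — 2 statements merged into one kernel-verified Lean document; each statement's English description precedes it below -/
import Mathlib

section
/- Let λ and ρ be two left-infinite words over a finite alphabet A, and for n ∈ ℕ let λ_n and ρ_n denote their suffixes of length n. Then the set OG_{λ,ρ} = {og(λ_n, ρ_n) : n ∈ ℕ} is finite if and only if there exists a finite word w over A such that ρ = λw or λ = ρw. -/
/-- The suffix of length `n` of the left-infinite word `⋯ (lam 2)(lam 1)(lam 0)`. -/
def lSuffix {A : Type*} (lam : ℕ → A) (n : ℕ) : List A := (List.range n).reverse.map lam

/-- The prefix of length `n` of the right-infinite word `(rho 0)(rho 1)(rho 2) ⋯`. -/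
def rPrefix {A : Type*} (rho : ℕ → A) (n : ℕ) : List A := (List.range n).map rho

/-- The left overlap gap between two finite words. -/
noncomputable def logGap {A : Type*} (u v : List A) : ℕ :=
  sInf {n | ∃ x x' : List A, x.length = n ∧ x'.length = n ∧ u ++ x = x' ++ v}

/-- The right overlap gap between two finite words. -/
noncomputable def rogGap {A : Type*} (u v : List A) : ℕ :=
  sInf {n | ∃ x x' : List A, x.length = n ∧ x'.length = n ∧ x ++ u = v ++ x'}

/-- The overlap gap between two finite words. -/
noncomputable def ogGap {A : Type*} (u v : List A) : ℕ := min (logGap u v) (rogGap u v)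

/-! For words `u`, `v` of equal length, a gap of size `k` is possible exactly when dropping the first
`k` letters of `u` leaves a prefix of `v`. For the suffixes `λ_n` and `ρ_n` this says that `ρ` with its
last `k` letters erased agrees with `λ` on the last `n - k` letters. If only finitely many gaps occur,
then some `k` is the gap, on one fixed side, for infinitely many `n`, and the agreement extends to
all letters. -/

open Filter

theorem exists_frequently_eq_of_finite_range {α β : Type*} {f : α → β} {l : Filter α} [NeBot l]
    (hf : (Set.range f).Finite) : ∃ b, ∃ᶠ a in l, f a = b := by
  obtain ⟨b, -, hb⟩ := (hf.frequently_exists (p := fun b a => f a = b)).1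
    (Frequently.of_forall (f := l) fun a => ⟨f a, Set.mem_range_self a, rfl⟩)
  exact ⟨b, hb⟩

section FiniteWords

variable {A : Type*} {u v : List A} {k : ℕ}

theorem exists_append_eq_append_iff_drop_prefix (huv : u.length = v.length) (hk : k ≤ u.length) :
    (∃ x x' : List A, x.length = k ∧ x'.length = k ∧ u ++ x = x' ++ v) ↔ u.drop k <+: v := by
  constructor
  · rintro ⟨x, x', -, rfl, h⟩
    refine ⟨x, ?_⟩
    rw [← List.drop_append_of_le_length hk, h, List.drop_left]
  · rintro ⟨x, rfl⟩
    refine ⟨x, u.take k, ?_, List.length_take_of_le hk, ?_⟩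
    · rw [List.length_append, List.length_drop] at huv
      lia
    · rw [← List.append_assoc, List.take_append_drop]

theorem logGap_le_length (huv : u.length = v.length) : logGap u v ≤ u.length :=
  Nat.sInf_le ⟨v, u, huv.symm, rfl, rfl⟩

theorem drop_logGap_prefix (huv : u.length = v.length) : u.drop (logGap u v) <+: v := by
  rw [← exists_append_eq_append_iff_drop_prefix huv (logGap_le_length huv)]
  exact Nat.sInf_mem (s := {n | ∃ x x' : List A, x.length = n ∧ x'.length = n ∧ u ++ x = x' ++ v})
    ⟨u.length, v, u, huv.symm, rfl, rfl⟩

theorem logGap_le_of_drop_prefix (huv : u.length = v.length) (h : u.drop k <+: v) :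
    logGap u v ≤ k := by
  rcases le_total k u.length with hk | hk
  · exact Nat.sInf_le ((exists_append_eq_append_iff_drop_prefix huv hk).2 h)
  · exact (logGap_le_length huv).trans hk

theorem rogGap_eq_logGap_swap (u v : List A) : rogGap u v = logGap v u := by
  unfold rogGap logGap
  congr! 3 with n
  constructor <;> exact fun ⟨x, x', hx, hx', h⟩ => ⟨x', x, hx', hx, h.symm⟩

theorem ogGap_eq_min_logGap (u v : List A) : ogGap u v = min (logGap u v) (logGap v u) := by
  rw [ogGap, rogGap_eq_logGap_swap]

end FiniteWords

section Suffixes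

variable {A : Type*} {lam rho : ℕ → A} {k : ℕ}

@[simp]
theorem length_lSuffix (lam : ℕ → A) (n : ℕ) : (lSuffix lam n).length = n := by
  simp [lSuffix]

theorem drop_lSuffix (lam : ℕ → A) (n k : ℕ) :
    (lSuffix lam n).drop k = lSuffix lam (n - k) := by
  rw [lSuffix, List.map_reverse, List.drop_reverse, ← List.map_take, List.take_range]
  simp [lSuffix]

theorem lSuffix_add (lam : ℕ → A) (k m : ℕ) :
    lSuffix lam (k + m) = lSuffix (fun i => lam (k + i)) m ++ lSuffix lam k := by
  simp [lSuffix, List.range_add, Function.comp_def]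

theorem lSuffix_eq_lSuffix_iff {n : ℕ} :
    lSuffix lam n = lSuffix rho n ↔ ∀ i < n, lam i = rho i := by
  simp [lSuffix]

theorem lSuffix_prefix_lSuffix_add_iff {m : ℕ} :
    lSuffix lam m <+: lSuffix rho (k + m) ↔ ∀ i < m, lam i = rho (k + i) := by
  rw [lSuffix_add, List.prefix_iff_eq_take, length_lSuffix, List.take_left' (length_lSuffix _ m),
    lSuffix_eq_lSuffix_iff]

theorem drop_lSuffix_prefix_lSuffix_iff {n : ℕ} :
    (lSuffix lam n).drop k <+: lSuffix rho n ↔ ∀ i, k + i < n → lam i = rho (k + i) := by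
  rw [drop_lSuffix]
  rcases le_total k n with hk | hk
  · obtain ⟨m, rfl⟩ := Nat.exists_eq_add_of_le hk
    simp [lSuffix_prefix_lSuffix_add_iff]
  · rw [Nat.sub_eq_zero_of_le hk]
    exact iff_of_true List.nil_prefix fun i hi => by lia

theorem logGap_lSuffix_le_of_forall_eq (h : ∀ i, rho (k + i) = lam i) (n : ℕ) :
    logGap (lSuffix lam n) (lSuffix rho n) ≤ k :=
  logGap_le_of_drop_prefix (by simp)
    (drop_lSuffix_prefix_lSuffix_iff.2 fun i _ => (h i).symm)

theorem forall_eq_of_frequently_logGap_eq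
    (h : ∃ᶠ n in atTop, logGap (lSuffix lam n) (lSuffix rho n) = k) (i : ℕ) :
    rho (k + i) = lam i := by
  obtain ⟨n, hgap, hn⟩ := (h.and_eventually (eventually_gt_atTop (k + i))).exists
  have hprefix : (lSuffix lam n).drop k <+: lSuffix rho n :=
    hgap ▸ drop_logGap_prefix (by simp)
  exact (drop_lSuffix_prefix_lSuffix_iff.1 hprefix i hn).symm

theorem exists_lSuffix_eq_and_iff (lam : ℕ → A) (p : ℕ → Prop) :
    (∃ w : List A, lSuffix lam w.length = w ∧ p w.length) ↔ ∃ k, p k :=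
  ⟨fun ⟨w, _, hw⟩ => ⟨w.length, hw⟩, fun ⟨k, hk⟩ => ⟨lSuffix lam k, by simp, by simpa using hk⟩⟩

end Suffixes

theorem og_finite_iff_left_general {A : Type*} (lam rho : ℕ → A) :
    (Set.range fun n => ogGap (lSuffix lam n) (lSuffix rho n)).Finite ↔
      ∃ w : List A,
        (lSuffix rho w.length = w ∧ ∀ i, rho (w.length + i) = lam i) ∨
        (lSuffix lam w.length = w ∧ ∀ i, lam (w.length + i) = rho i) := by
  simp only [exists_or, exists_lSuffix_eq_and_iff rho (fun k => ∀ i, rho (k + i) = lam i),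
    exists_lSuffix_eq_and_iff lam (fun k => ∀ i, lam (k + i) = rho i), ogGap_eq_min_logGap]
  constructor
  · intro hfin
    obtain ⟨k, hk⟩ := exists_frequently_eq_of_finite_range (l := atTop) hfin
    have hside : ∃ᶠ n in atTop, logGap (lSuffix lam n) (lSuffix rho n) = k ∨
        logGap (lSuffix rho n) (lSuffix lam n) = k :=
      hk.mono fun n hn => hn ▸ (min_choice _ _).imp Eq.symm Eq.symm
    exact (frequently_or_distrib.1 hside).imp
      (fun h => ⟨k, forall_eq_of_frequently_logGap_eq h⟩)
      (fun h => ⟨k, forall_eq_of_frequently_logGap_eq h⟩)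
  · rintro (⟨k, hk⟩ | ⟨k, hk⟩) <;>
      refine (Set.finite_Iic k).subset (Set.range_subset_iff.2 fun n => ?_)
    · exact min_le_of_left_le (logGap_lSuffix_le_of_forall_eq hk n)
    · exact min_le_of_right_le (logGap_lSuffix_le_of_forall_eq hk n)

/-- For two left-infinite words `λ, ρ`, the set `OG_{λ,ρ} = {og(λ_n, ρ_n) : n ∈ ℕ}`
(with `λ_n, ρ_n` suffixes of length `n`) is finite iff `ρ = λw` or `λ = ρw` for some
finite word `w`. -/
theorem og_finite_iff_left {A : Type*} [Fintype A] [Nonempty A] (lam rho : ℕ → A) :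
    (Set.range fun n => ogGap (lSuffix lam n) (lSuffix rho n)).Finite ↔
      ∃ w : List A,
        (lSuffix rho w.length = w ∧ ∀ i, rho (w.length + i) = lam i) ∨
        (lSuffix lam w.length = w ∧ ∀ i, lam (w.length + i) = rho i) :=
  og_finite_iff_left_general lam rho
end

section
/- Let λ be a left-infinite word and ρ a right-infinite word over a finite alphabet A. Suppose the set S = {n ∈ ℕ : λ_n = ρ_n} is infinite, and that there is a positive integer k such that n ∈ S and n + k ∈ S for infinitely many n. Then, writing u = ρ_k (the prefix of ρ of length k), there exist finite words r and s with u = rs such that λ = ∞(sr) = ∞u·r and ρ = u∞. -/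
/-- `lam` is the left-infinite word `∞u·w = ⋯uuuw`. -/
def IsLeftUP {A : Type*} (lam : ℕ → A) (u w : List A) : Prop :=
  ∀ k : ℕ, lSuffix lam (w.length + k * u.length) = (List.replicate k u).flatten ++ w

/-- `rho` is the right-infinite word `w·u∞ = wuuu⋯`. -/
def IsRightUP {A : Type*} (rho : ℕ → A) (w u : List A) : Prop :=
  ∀ k : ℕ, rPrefix rho (w.length + k * u.length) = w ++ (List.replicate k u).flatten

/-!
If `λ_n = ρ_n` and `λ_{n+k} = ρ_{n+k}`, then `ρ_n` is both a prefix and a suffix of `ρ_{n+k}`, so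
`ρ i = ρ (i + k)` for all `i < n`. As `n` is unbounded, `ρ` has period `k`, that is `ρ = u∞` with
`u = ρ_k`; by the left-right symmetry, `λ` has period `k` too. Two words of period `k` that agree at
one length `n ≥ k` agree at every length congruent to `n` modulo `k`, so with `r = ρ_{n % k}` all
the suffixes of `λ` of length `|r| + t * k` are the words `uᵗr`.
-/

section Prefixes

variable {A : Type*} (rho : ℕ → A)

@[simp]
theorem length_rPrefix (n : ℕ) : (rPrefix rho n).length = n := by
  simp [rPrefix]

theorem rPrefix_add (m n : ℕ) :
    rPrefix rho (m + n) = rPrefix rho m ++ rPrefix (fun i ↦ rho (m + i)) n := by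
  simp [rPrefix, List.range_add, Function.comp_def]

theorem rPrefix_prefix_rPrefix {m n : ℕ} (h : m ≤ n) : rPrefix rho m <+: rPrefix rho n := by
  obtain ⟨d, rfl⟩ := Nat.exists_eq_add_of_le h
  exact ⟨_, (rPrefix_add rho m d).symm⟩

variable {rho} {k : ℕ}

theorem rPrefix_add_mul_of_periodic (hrho : Function.Periodic rho k) (a t : ℕ) :
    rPrefix rho (a + t * k) = (List.replicate t (rPrefix rho k)).flatten ++ rPrefix rho a := by
  induction t with
  | zero => simp
  | succ t ih =>
    have hshift : (fun i ↦ rho (k + i)) = rho := funext fun i ↦ by rw [add_comm, hrho]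
    calc rPrefix rho (a + (t + 1) * k)
        = rPrefix rho (k + (a + t * k)) := by congr 1; ring
      _ = rPrefix rho k ++ rPrefix rho (a + t * k) := by rw [rPrefix_add, hshift]
      _ = _ := by rw [ih, List.replicate_succ, List.flatten_cons, List.append_assoc]

theorem isRightUP_of_periodic (hrho : Function.Periodic rho k) :
    IsRightUP rho [] (rPrefix rho k) := fun t ↦ by
  simpa [rPrefix] using rPrefix_add_mul_of_periodic hrho 0 t

end Prefixes

section Agreements

variable {A : Type*} {lam rho : ℕ → A} {k : ℕ}

theorem lSuffix_eq_rPrefix_iff {n : ℕ} :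
    lSuffix lam n = rPrefix rho n ↔ ∀ i j, i + j + 1 = n → lam j = rho i := by
  have hpointwise : lSuffix lam n = rPrefix rho n ↔ ∀ i < n, lam (n - 1 - i) = rho i := by
    simp [lSuffix, rPrefix, List.ext_getElem_iff]
  rw [hpointwise]
  constructor
  · rintro h i j rfl
    simpa using h i (by lia)
  · exact fun h i hi ↦ h i _ (by lia)

theorem lSuffix_eq_rPrefix_comm {n : ℕ} :
    lSuffix lam n = rPrefix rho n ↔ lSuffix rho n = rPrefix lam n := by
  simp only [lSuffix_eq_rPrefix_iff]
  exact ⟨fun h i j hij ↦ (h j i (by lia)).symm, fun h i j hij ↦ (h j i (by lia)).symm⟩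

theorem periodic_right_of_infinite_agreements
    (h : {n : ℕ | lSuffix lam n = rPrefix rho n ∧
      lSuffix lam (n + k) = rPrefix rho (n + k)}.Infinite) :
    Function.Periodic rho k := by
  intro i
  obtain ⟨n, ⟨hn, hnk⟩, hin⟩ := h.exists_gt i
  rw [lSuffix_eq_rPrefix_iff] at hn hnk
  calc rho (i + k) = lam (n - 1 - i) := (hnk _ _ (by lia)).symm
    _ = rho i := hn _ _ (by lia)

theorem periodic_left_of_infinite_agreements
    (h : {n : ℕ | lSuffix lam n = rPrefix rho n ∧
      lSuffix lam (n + k) = rPrefix rho (n + k)}.Infinite) :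
    Function.Periodic lam k := by
  simp only [lSuffix_eq_rPrefix_comm (lam := lam)] at h
  exact periodic_right_of_infinite_agreements h

theorem lSuffix_eq_rPrefix_of_modEq (hlam : Function.Periodic lam k)
    (hrho : Function.Periodic rho k) {m n : ℕ} (hkn : k ≤ n) (hk : 0 < k)
    (hmn : m ≡ n [MOD k]) (hn : lSuffix lam n = rPrefix rho n) :
    lSuffix lam m = rPrefix rho m := by
  rw [lSuffix_eq_rPrefix_iff] at hn ⊢
  intro i j hij
  have hik : i % k < k := Nat.mod_lt i hk
  obtain ⟨j', hj'⟩ : ∃ j', i % k + j' + 1 = n := ⟨n - 1 - i % k, by lia⟩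
  have hjj' : j ≡ j' [MOD k] := by
    refine Nat.ModEq.add_left_cancel (Nat.mod_modEq i k).symm (Nat.ModEq.add_right_cancel' 1 ?_)
    rwa [hij, hj']
  calc lam j = lam j' := by rw [← hlam.map_mod_nat, hjj', hlam.map_mod_nat]
    _ = rho (i % k) := hn _ _ hj'
    _ = rho i := hrho.map_mod_nat i

theorem isLeftUP_of_agreements (hrho : Function.Periodic rho k) {a : ℕ}
    (h : ∀ t, lSuffix lam (a + t * k) = rPrefix rho (a + t * k)) :
    IsLeftUP lam (rPrefix rho k) (rPrefix rho a) := fun t ↦ by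
  rw [length_rPrefix, length_rPrefix, h, rPrefix_add_mul_of_periodic hrho]

end Agreements

theorem eventually_periodic_of_agreements_general {A : Type*} (lam rho : ℕ → A) (k : ℕ)
    (hk : 1 ≤ k)
    (hSk : {n : ℕ | lSuffix lam n = rPrefix rho n ∧
      lSuffix lam (n + k) = rPrefix rho (n + k)}.Infinite) :
    ∃ r s : List A, rPrefix rho k = r ++ s ∧
      IsLeftUP lam (rPrefix rho k) r ∧ IsRightUP rho [] (rPrefix rho k) := by
  have hrho : Function.Periodic rho k := periodic_right_of_infinite_agreements hSk
  have hlam : Function.Periodic lam k := periodic_left_of_infinite_agreements hSk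
  obtain ⟨n, ⟨hn, -⟩, hkn⟩ := hSk.exists_gt k
  obtain ⟨s, hs⟩ := rPrefix_prefix_rPrefix rho (Nat.mod_lt n hk).le
  have hagree (t : ℕ) : lSuffix lam (n % k + t * k) = rPrefix rho (n % k + t * k) :=
    lSuffix_eq_rPrefix_of_modEq hlam hrho hkn.le hk (by simp [Nat.ModEq]) hn
  exact ⟨rPrefix rho (n % k), s, hs.symm, isLeftUP_of_agreements hrho hagree,
    isRightUP_of_periodic hrho⟩

/-- If `{n : λ_n = ρ_n}` is infinite and there is a positive `k` such that both `n` and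
`n + k` are agreement lengths for infinitely many `n`, then, with `u = ρ_k`, there are
words `r, s` with `u = rs`, `λ = ∞(sr) = ∞u·r` and `ρ = u∞`. -/
theorem eventually_periodic_of_agreements {A : Type*} [Fintype A] [Nonempty A]
    (lam rho : ℕ → A) (k : ℕ) (hk : 1 ≤ k)
    (hS : {n : ℕ | lSuffix lam n = rPrefix rho n}.Infinite)
    (hSk : {n : ℕ | lSuffix lam n = rPrefix rho n ∧
      lSuffix lam (n + k) = rPrefix rho (n + k)}.Infinite) :
    ∃ r s : List A, rPrefix rho k = r ++ s ∧
      IsLeftUP lam (rPrefix rho k) r ∧ IsRightUP rho [] (rPrefix rho k) :=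
  eventually_periodic_of_agreements_general lam rho k hk hSk
end
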